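/- Let G be a connected twin graph on an even number n of vertices, with the t = n/2 − 1 pairwise disjoint twin pairs C_1,…,C_t and the two remaining (non-twin) vertices v_{n−1}, v_n, and let π* = {C_1,…,C_t,{v_{n−1}},{v_n}} be the twin partition of G. If the quotient Laplacian L_{π*} admits an almost equitable partition of the quotient graph of the form ρ = {S_1,…,S_m, {{v_{n−1}},{v_n}}}, where {S_1,…,S_m} is a partition of {C_1,…,C_t}, then G is strongly uncontrollable, i.e., (L(G), b) is uncontrollable for every b ∈ {0,1}^n. -/

import Mathlib

open Classical Matrix

noncomputable def lap {n : ℕ} (G : SimpleGraph (Fin n)) : Matrix (Fin n) (Fin n) ℝ :=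
  Matrix.of fun i j =>
    (if i = j then ((G.neighborSet i).ncard : ℝ) else 0) - (if G.Adj i j then 1 else 0)

def IsTwin {n : ℕ} (G : SimpleGraph (Fin n)) (u v : Fin n) : Prop :=
  u ≠ v ∧ G.neighborSet u \ {v} = G.neighborSet v \ {u}

def IsEigenvalue {n : ℕ} (M : Matrix (Fin n) (Fin n) ℝ) (μ : ℝ) : Prop :=
  ∃ x : Fin n → ℝ, x ≠ 0 ∧ M.mulVec x = μ • x

def HasSimpleSpectrum {n : ℕ} (M : Matrix (Fin n) (Fin n) ℝ) : Prop :=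
  ∃ μ : Fin n → ℝ, Function.Injective μ ∧ ∀ i, IsEigenvalue M (μ i)

def Controllable {n : ℕ} (M : Matrix (Fin n) (Fin n) ℝ) (b : Fin n → ℝ) : Prop :=
  Submodule.span ℝ (Set.range fun k : Fin n => (M ^ (k : ℕ)).mulVec b) = ⊤

def StronglyUncontrollable {n : ℕ} (G : SimpleGraph (Fin n)) : Prop :=
  G.Connected ∧ HasSimpleSpectrum (lap G) ∧
    ∀ b : Fin n → ℝ, (∀ i, b i = 0 ∨ b i = 1) → ¬ Controllable (lap G) b

def Pmat {n k : ℕ} (c : Fin n → Fin k) : Matrix (Fin n) (Fin k) ℝ :=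
  Matrix.of fun i j => if c i = j then 1 else 0

def IsAEP {n k : ℕ} (G : SimpleGraph (Fin n)) (c : Fin n → Fin k) : Prop :=
  ∀ i j : Fin k, i ≠ j → ∀ x y : Fin n, c x = i → c y = i →
    (G.neighborSet x ∩ {z | c z = j}).ncard = (G.neighborSet y ∩ {z | c z = j}).ncard

noncomputable def quotLap {n k : ℕ} (G : SimpleGraph (Fin n)) (c : Fin n → Fin k) :
    Matrix (Fin k) (Fin k) ℝ :=
  ((Pmat c)ᵀ * Pmat c)⁻¹ * (Pmat c)ᵀ * lap G * Pmat c

def IsQuotAEP {k m : ℕ} (Lq : Matrix (Fin k) (Fin k) ℝ) (r : Fin k → Fin m) : Prop :=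
  ∀ a b : Fin m, a ≠ b → ∀ C C' : Fin k, r C = a → r C' = a →
    ∑ C'' ∈ Finset.univ.filter (fun C'' => r C'' = b), Lq C C'' =
      ∑ C'' ∈ Finset.univ.filter (fun C'' => r C'' = b), Lq C' C''

def IsGraphAut {n : ℕ} (G : SimpleGraph (Fin n)) (σ : Equiv.Perm (Fin n)) : Prop :=
  ∀ x y, G.Adj x y ↔ G.Adj (σ x) (σ y)

def joinOne {n : ℕ} (G : SimpleGraph (Fin n)) : SimpleGraph (Fin (n + 1)) where
  Adj x y := x ≠ y ∧ ((x : ℕ) = n ∨ (y : ℕ) = n ∨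
    ∃ (hx : (x : ℕ) < n) (hy : (y : ℕ) < n), G.Adj ⟨x, hx⟩ ⟨y, hy⟩)
  symm := by
    constructor
    rintro x y ⟨hxy, h⟩
    refine ⟨hxy.symm, ?_⟩
    rcases h with h | h | ⟨hx, hy, h⟩
    exacts [Or.inr (Or.inl h), Or.inl h, Or.inr (Or.inr ⟨hy, hx, h.symm⟩)]
  loopless := ⟨fun x h => h.1 rfl⟩

def joinTwo {n : ℕ} (G : SimpleGraph (Fin n)) : SimpleGraph (Fin (n + 2)) where
  Adj x y := x ≠ y ∧ (((x : ℕ) < n ∧ n ≤ (y : ℕ)) ∨ ((y : ℕ) < n ∧ n ≤ (x : ℕ)) ∨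
    ∃ (hx : (x : ℕ) < n) (hy : (y : ℕ) < n), G.Adj ⟨x, hx⟩ ⟨y, hy⟩)
  symm := by
    constructor
    rintro x y ⟨hxy, h⟩
    refine ⟨hxy.symm, ?_⟩
    rcases h with h | h | ⟨hx, hy, h⟩
    exacts [Or.inr (Or.inl h), Or.inl h, Or.inr (Or.inr ⟨hy, hx, h.symm⟩)]
  loopless := ⟨fun x h => h.1 rfl⟩

def addPendant {n : ℕ} (G : SimpleGraph (Fin n)) (v : Fin n) : SimpleGraph (Fin (n + 1)) where
  Adj x y := ((x : ℕ) = n ∧ (y : ℕ) = (v : ℕ)) ∨ ((y : ℕ) = n ∧ (x : ℕ) = (v : ℕ)) ∨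
    ∃ (hx : (x : ℕ) < n) (hy : (y : ℕ) < n), G.Adj ⟨x, hx⟩ ⟨y, hy⟩
  symm := by
    constructor
    rintro x y (h | h | ⟨hx, hy, h⟩)
    exacts [Or.inr (Or.inl h), Or.inl h, Or.inr (Or.inr ⟨hy, hx, h.symm⟩)]
  loopless := by
    constructor
    intro x h
    have hv := v.isLt
    rcases h with ⟨h1, h2⟩ | ⟨h1, h2⟩ | ⟨hx, hy, h⟩
    · omega
    · omega
    · exact G.loopless.irrefl _ h

theorem lap_symm' {n : ℕ} (G : SimpleGraph (Fin n)) : (lap G)ᵀ = lap G := by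
  ext i j
  simp only [lap, Matrix.transpose_apply, Matrix.of_apply, G.adj_comm j i]
  by_cases h : i = j
  · subst h; rfl
  · simp [h, Ne.symm h]

theorem lap_dot {n : ℕ} (G : SimpleGraph (Fin n)) (x y : Fin n → ℝ) :
    (lap G *ᵥ x) ⬝ᵥ y = x ⬝ᵥ (lap G *ᵥ y) := by
  rw [Matrix.dotProduct_mulVec, ← Matrix.mulVec_transpose, lap_symm']

theorem lap_one {n : ℕ} (G : SimpleGraph (Fin n)) : lap G *ᵥ (fun _ => 1) = 0 := by
  ext i
  simp only [Matrix.mulVec, dotProduct, lap, Matrix.of_apply, mul_one, Finset.sum_sub_distrib,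
    Finset.sum_ite_eq, Finset.mem_univ, if_true, Pi.zero_apply]
  rw [Finset.sum_boole, Set.ncard_eq_toFinset_card', sub_eq_zero]
  congr 2
  ext j
  simp

theorem twin_adj {n : ℕ} {G : SimpleGraph (Fin n)} {u v : Fin n} (h : IsTwin G u v)
    (w : Fin n) (hu : w ≠ u) (hv : w ≠ v) : G.Adj u w ↔ G.Adj v w := by
  have := Set.ext_iff.1 h.2 w
  simpa [hu, hv] using this

theorem twin_mulVec {n : ℕ} {G : SimpleGraph (Fin n)} {u v : Fin n} (h : IsTwin G u v)
    (f : Fin n → ℝ) (hf : f u = f v) : (lap G *ᵥ f) u = (lap G *ᵥ f) v := by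
  have h0 : ∀ w, (lap G *ᵥ f) w = ∑ y, lap G w y * (f y - f u) := by
    intro w
    have h1 := congrFun (lap_one G) w
    simp only [Matrix.mulVec, dotProduct, mul_one, Pi.zero_apply] at h1
    simp only [mul_sub, Finset.sum_sub_distrib, ← Finset.sum_mul, h1, Matrix.mulVec, dotProduct]
    ring
  rw [h0, h0]
  refine Finset.sum_congr rfl fun y _ => ?_
  by_cases h1 : y = u
  · subst h1; simp
  by_cases h2 : y = v
  · subst h2; simp [hf]
  congr 1
  simp [lap, Ne.symm h1, Ne.symm h2, twin_adj h y h1 h2]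

theorem not_ctrl {n : ℕ} (M : Matrix (Fin n) (Fin n) ℝ) (b : Fin n → ℝ)
    (V : Submodule ℝ (Fin n → ℝ)) (hV : ∀ x ∈ V, M *ᵥ x ∈ V) (hb : b ∈ V)
    (z : Fin n → ℝ) (hz : z ∉ V) : ¬ Controllable M b := by
  intro hc
  have hk : ∀ k : ℕ, (M ^ k) *ᵥ b ∈ V := by
    intro k
    induction k with
    | zero => simpa using hb
    | succ k ih =>
      rw [pow_succ', ← Matrix.mulVec_mulVec]
      exact hV _ ih
  have : (⊤ : Submodule ℝ (Fin n → ℝ)) ≤ V := by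
    rw [← hc]
    apply Submodule.span_le.2
    rintro _ ⟨k, rfl⟩
    exact hk k
  exact hz (this trivial)

theorem factor_of {n k : ℕ} (c : Fin n → Fin k) (f : Fin n → ℝ)
    (h : ∀ x y, c x = c y → f x = f y) : ∃ g : Fin k → ℝ, f = g ∘ c := by
  refine (Function.factorsThrough_iff (f := c) f).1 ?_
  intro x y hxy
  exact h x y hxy

theorem Pmat_mulVec {n k : ℕ} (c : Fin n → Fin k) (w : Fin k → ℝ) : Pmat c *ᵥ w = w ∘ c := by
  ext i
  simp [Pmat, Matrix.mulVec, dotProduct]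

theorem quot_eq {n k : ℕ} (G : SimpleGraph (Fin n)) (c : Fin n → Fin k)
    (hsurj : Function.Surjective c)
    (hfac : ∀ h : Fin k → ℝ, ∃ h' : Fin k → ℝ, lap G *ᵥ (h ∘ c) = h' ∘ c) :
    lap G * Pmat c = Pmat c * quotLap G c := by
  have hK : ∃ K : Matrix (Fin k) (Fin k) ℝ, lap G * Pmat c = Pmat c * K := by
    choose F hF using hfac
    refine ⟨Matrix.of fun i j => F (Pi.single j 1) i, ?_⟩
    ext i j
    have := congrFun (hF (Pi.single j 1)) i
    rw [← Pmat_mulVec, Matrix.mulVec_mulVec] at this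
    simp only [Matrix.mulVec_single_one, Matrix.col_apply, Function.comp] at this
    rw [this]
    simp [Pmat, Matrix.mul_apply]
  obtain ⟨K, hK⟩ := hK
  have hD : IsUnit ((Pmat c)ᵀ * Pmat c).det := by
    have : (Pmat c)ᵀ * Pmat c =
        Matrix.diagonal fun i => ((Finset.univ.filter fun y => c y = i).card : ℝ) := by
      ext i j
      simp only [Matrix.mul_apply, Pmat, Matrix.transpose_apply, Matrix.of_apply,
        Matrix.diagonal_apply]
      split_ifs with h
      · subst h
        rw [Finset.card_eq_sum_ones, Finset.sum_filter, Nat.cast_sum]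
        refine Finset.sum_congr rfl fun y _ => ?_
        split_ifs <;> simp
      · apply Finset.sum_eq_zero
        intro y _
        by_cases h1 : c y = i
        · simp [h1, h]
        · simp [h1]
    rw [this, Matrix.det_diagonal, isUnit_iff_ne_zero, Finset.prod_ne_zero_iff]
    intro i _
    obtain ⟨y, hy⟩ := hsurj i
    have : (Finset.univ.filter fun y => c y = i).Nonempty := ⟨y, by simp [hy]⟩
    exact_mod_cast this.card_pos.ne'
  have : quotLap G c = K := by
    rw [quotLap, Matrix.mul_assoc, hK, Matrix.mul_assoc, ← Matrix.mul_assoc (Pmat c)ᵀ,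
      ← Matrix.mul_assoc, Matrix.nonsing_inv_mul _ hD, Matrix.one_mul]
  rw [this, hK]

theorem quot_fac {n k m : ℕ} (G : SimpleGraph (Fin n)) (c : Fin n → Fin k)
    (hsurj : Function.Surjective c)
    (hfac : ∀ h : Fin k → ℝ, ∃ h' : Fin k → ℝ, lap G *ᵥ (h ∘ c) = h' ∘ c)
    (r : Fin k → Fin m) (hρ : IsQuotAEP (quotLap G c) r) (h : Fin m → ℝ) :
    ∃ h' : Fin m → ℝ, lap G *ᵥ (h ∘ r ∘ c) = h' ∘ r ∘ c := by
  have hq := quot_eq G c hsurj hfac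
  set Lq := quotLap G c
  have hL : ∀ w : Fin k → ℝ, lap G *ᵥ (w ∘ c) = (Lq *ᵥ w) ∘ c := by
    intro w
    rw [← Pmat_mulVec, ← Pmat_mulVec, Matrix.mulVec_mulVec, Matrix.mulVec_mulVec, hq]
  have h1 : ∀ C, ∑ C', Lq C C' = 0 := by
    intro C
    obtain ⟨x, rfl⟩ := hsurj C
    have := congrFun (hL fun _ => 1) x
    have h2 := congrFun (lap_one G) x
    simp only [Function.comp_def] at this
    rw [h2] at this
    simpa [Matrix.mulVec, dotProduct] using this.symm
  refine factor_of (r ∘ c) _ ?_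
  intro x y hxy
  have := hL (h ∘ r)
  rw [Function.comp_assoc] at this
  rw [this]
  simp only [Function.comp] at hxy ⊢
  have key : ∀ C, (Lq *ᵥ fun z => h (r z)) C = ∑ j, (h j - h (r C)) *
      ∑ C'' ∈ Finset.univ.filter (fun C'' => r C'' = j), Lq C C'' := by
    intro C
    have e1 : (Lq *ᵥ fun z => h (r z)) C = ∑ C'', (h (r C'') - h (r C)) * Lq C C'' := by
      simp only [sub_mul, Finset.sum_sub_distrib, ← Finset.mul_sum, h1, Matrix.mulVec, dotProduct]
      simp [mul_comm]
    rw [e1, ← Finset.sum_fiberwise Finset.univ r]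
    refine Finset.sum_congr rfl fun j _ => ?_
    rw [Finset.mul_sum]
    refine Finset.sum_congr rfl fun C'' hC => ?_
    rw [(Finset.mem_filter.1 hC).2]
  change (Lq *ᵥ fun z => h (r z)) (c x) = (Lq *ᵥ fun z => h (r z)) (c y)
  rw [key, key]
  refine Finset.sum_congr rfl fun j _ => ?_
  rw [hxy]
  by_cases hj : j = r (c y)
  · simp [hj]
  · rw [hρ (r (c y)) j (Ne.symm hj) (c x) (c y) hxy rfl]

theorem sum_cells {t n : ℕ} (u v : Fin t → Fin n) (a b : Fin n) (c : Fin n → Fin (t + 2))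
    (huv : ∀ i, u i ≠ v i)
    (hc : ∀ (i : Fin t) (x : Fin n), c x = Fin.castLE (by omega) i ↔ (x = u i ∨ x = v i))
    (hca : ∀ x, c x = ⟨t, by omega⟩ ↔ x = a)
    (hcb : ∀ x, c x = ⟨t + 1, by omega⟩ ↔ x = b)
    (d : Fin n → ℝ) (hd : ∀ i, d (u i) + d (v i) = 0) (k : Fin (t + 2) → ℝ) :
    d ⬝ᵥ (k ∘ c) = d a * k ⟨t, by omega⟩ + d b * k ⟨t + 1, by omega⟩ := by
  have h0 : d ⬝ᵥ (k ∘ c) = ∑ C, k C * ∑ y ∈ Finset.univ.filter (fun y => c y = C), d y := by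
    rw [dotProduct, ← Finset.sum_fiberwise Finset.univ c]
    refine Finset.sum_congr rfl fun j _ => ?_
    rw [Finset.mul_sum]
    refine Finset.sum_congr rfl fun y hy => ?_
    rw [Function.comp, (Finset.mem_filter.1 hy).2, mul_comm]
  rw [h0, Fin.sum_univ_castSucc, Fin.sum_univ_castSucc]
  have h1 : ∀ i : Fin t, ∑ y ∈ Finset.univ.filter
      (fun y => c y = (i.castSucc.castSucc : Fin (t+2))), d y = 0 := by
    intro i
    have : Finset.univ.filter (fun y => c y = (i.castSucc.castSucc : Fin (t+2))) = {u i, v i} := by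
      ext y
      simp only [Finset.mem_filter, Finset.mem_univ, true_and, Finset.mem_insert,
        Finset.mem_singleton]
      exact hc i y
    rw [this, Finset.sum_pair (huv i), hd]
  have h2 : Finset.univ.filter (fun y => c y = ((Fin.last t).castSucc : Fin (t+2))) = {a} := by
    ext y
    simp only [Finset.mem_filter, Finset.mem_univ, true_and, Finset.mem_insert,
      Finset.mem_singleton]
    exact hca y
  have h3 : Finset.univ.filter (fun y => c y = (Fin.last (t+1) : Fin (t+2))) = {b} := by
    ext y
    simp only [Finset.mem_filter, Finset.mem_univ, true_and, Finset.mem_insert,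
      Finset.mem_singleton]
    exact hcb y
  simp only [h1, h2, h3, Finset.sum_singleton, mul_zero, Finset.sum_const_zero, zero_add]
  rw [mul_comm, mul_comm (k _) (d b)]
  rfl

theorem stmt4 {t n : ℕ} (hn : n = 2 * t + 2)
    (G : SimpleGraph (Fin n)) (hconn : G.Connected)
    (hspec : HasSimpleSpectrum (lap G))
    (u v : Fin t → Fin n) (a b : Fin n)
    (htwin : ∀ i, IsTwin G (u i) (v i))
    (hna : ∀ w, ¬ IsTwin G a w) (hnb : ∀ w, ¬ IsTwin G b w)
    (c : Fin n → Fin (t + 2))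
    (hc : ∀ (i : Fin t) (x : Fin n), c x = Fin.castLE (by omega) i ↔ (x = u i ∨ x = v i))
    (hca : ∀ x, c x = ⟨t, by omega⟩ ↔ x = a)
    (hcb : ∀ x, c x = ⟨t + 1, by omega⟩ ↔ x = b)
    {m : ℕ} (r : Fin (t + 2) → Fin (m + 1))
    (hrsurj : Function.Surjective r)
    (hrlast : ∀ j : Fin (t + 2), r j = Fin.last m ↔ ((j : ℕ) = t ∨ (j : ℕ) = t + 1))
    (hρ : IsQuotAEP (quotLap G c) r) :
    StronglyUncontrollable G := by
  refine ⟨hconn, hspec, fun w hw => ?_⟩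
  have huv : ∀ i, u i ≠ v i := fun i => (htwin i).1
  have hcu : ∀ i, c (u i) = Fin.castLE (by omega) i := fun i => (hc i _).2 (Or.inl rfl)
  have hcv : ∀ i, c (v i) = Fin.castLE (by omega) i := fun i => (hc i _).2 (Or.inr rfl)
  have hcaa := (hca a).2 rfl
  have hcbb := (hcb b).2 rfl
  have hcases : ∀ C : Fin (t + 2), (∃ i : Fin t, C = Fin.castLE (by omega) i) ∨
      C = ⟨t, by omega⟩ ∨ C = ⟨t + 1, by omega⟩ := by
    rintro ⟨j, hj⟩
    by_cases h : j < t
    · exact Or.inl ⟨⟨j, h⟩, rfl⟩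
    · right
      simp only [Fin.mk.injEq]
      omega
  have hab : a ≠ b := by
    intro h
    rw [h, hcbb] at hcaa
    simp at hcaa
  have hsurj : Function.Surjective c := by
    intro C
    rcases hcases C with ⟨i, rfl⟩ | rfl | rfl
    exacts [⟨_, hcu i⟩, ⟨_, hcaa⟩, ⟨_, hcbb⟩]
  have ht : 0 < t := by
    rcases Nat.eq_zero_or_pos t with h | h
    · exfalso
      subst h
      apply hna b
      have all : ∀ x : Fin n, x = a ∨ x = b := by
        intro x
        rcases hcases (c x) with ⟨i, _⟩ | h | h
        · exact i.elim0
        · exact Or.inl ((hca x).1 h)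
        · exact Or.inr ((hcb x).1 h)
      refine ⟨hab, ?_⟩
      ext x
      rcases all x with rfl | rfl <;> simp
    · exact h
  have hfac : ∀ h : Fin (t+2) → ℝ, ∃ h' : Fin (t+2) → ℝ, lap G *ᵥ (h ∘ c) = h' ∘ c := by
    intro h
    refine factor_of c _ ?_
    intro x y hxy
    rcases hcases (c y) with ⟨i, hi⟩ | hi | hi
    · have hh := twin_mulVec (htwin i) (h ∘ c) (by simp [hcu, hcv])
      rcases (hc i x).1 (hxy.trans hi) with rfl | rfl <;>
        rcases (hc i y).1 hi with rfl | rfl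
      exacts [rfl, hh, hh.symm, rfl]
    · rw [(hca y).1 hi, (hca x).1 (hxy.trans hi)]
    · rw [(hcb y).1 hi, (hcb x).1 (hxy.trans hi)]
  have hfacs := fun h : Fin (m+1) → ℝ => quot_fac G c hsurj hfac r hρ h
  have hra : r ⟨t, by omega⟩ = Fin.last m := (hrlast _).2 (Or.inl rfl)
  have hrb : r ⟨t + 1, by omega⟩ = Fin.last m := (hrlast _).2 (Or.inr rfl)
  have hri : ∀ i : Fin t, r (Fin.castLE (by omega) i) ≠ Fin.last m := by
    intro i hi
    have := (hrlast _).1 hi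
    have := i.2
    simp at *
    omega
  by_cases hA : ∃ i, w (u i) = w (v i)
  · obtain ⟨i, hi⟩ := hA
    let V : Submodule ℝ (Fin n → ℝ) :=
      { carrier := {x | x (u i) = x (v i)}
        add_mem' := by
          intro x y hx hy
          simp only [Set.mem_setOf_eq, Pi.add_apply] at *
          rw [hx, hy]
        zero_mem' := rfl
        smul_mem' := by
          intro k x hx
          simp only [Set.mem_setOf_eq, Pi.smul_apply] at *
          rw [hx] }
    refine not_ctrl _ _ V (fun x hx => twin_mulVec (htwin i) x hx) hi (Pi.single (u i) 1) ?_
    intro h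
    change (Pi.single (u i) (1:ℝ) : Fin n → ℝ) (u i) = (Pi.single (u i) (1:ℝ) : Fin n → ℝ) (v i) at h
    simp [Ne.symm (huv i)] at h
  push Not at hA
  have hsum : ∀ i, w (u i) + w (v i) = 1 := by
    intro i
    have := hA i
    rcases hw (u i) with h1 | h1 <;> rcases hw (v i) with h2 | h2 <;> simp_all
  by_cases hB : w a = w b
  · let V : Submodule ℝ (Fin n → ℝ) :=
      { carrier := {x | ∃ g : Fin (m+1) → ℝ, ∀ h : Fin (t+2) → ℝ,
          x ⬝ᵥ (h ∘ c) = (g ∘ r ∘ c) ⬝ᵥ (h ∘ c)}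
        add_mem' := by
          rintro x y ⟨g, hx⟩ ⟨g', hy⟩
          refine ⟨g + g', fun h => ?_⟩
          rw [add_dotProduct, hx, hy, ← add_dotProduct]
          rfl
        zero_mem' := ⟨0, fun h => rfl⟩
        smul_mem' := by
          rintro k x ⟨g, hx⟩
          refine ⟨k • g, fun h => ?_⟩
          rw [smul_dotProduct, hx, ← smul_dotProduct]
          rfl }
    refine not_ctrl _ _ V ?_ ?_ (Pi.single a 1) ?_
    · rintro x ⟨g, hx⟩
      obtain ⟨g', hg'⟩ := hfacs g
      refine ⟨g', fun h => ?_⟩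
      obtain ⟨h', hh'⟩ := hfac h
      rw [lap_dot, hh', hx, ← hh', ← lap_dot, hg']
    · refine ⟨fun j => if j = Fin.last m then w a else 1/2, fun h => ?_⟩
      rw [← sub_eq_zero, ← sub_dotProduct,
        sum_cells u v a b c huv hc hca hcb]
      · simp [hcaa, hcbb, hra, hrb, hB]
      · intro i
        have := hsum i
        simp [hcu, hcv, hri]
        linarith
    · rintro ⟨g, hg⟩
      have e1 := hg (Pi.single ⟨t, by omega⟩ 1)
      have e2 := hg (Pi.single ⟨t+1, by omega⟩ 1)
      have f1 : (Pi.single ⟨t, by omega⟩ 1 : Fin (t+2) → ℝ) ∘ c = Pi.single a 1 := by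
        ext x
        simp only [Function.comp, Pi.single_apply, hca]
      have f2 : (Pi.single ⟨t+1, by omega⟩ 1 : Fin (t+2) → ℝ) ∘ c = Pi.single b 1 := by
        ext x
        simp only [Function.comp, Pi.single_apply, hcb]
      rw [f1] at e1
      rw [f2] at e2
      simp [hcaa, hcbb, hra, hrb, hab, Ne.symm hab] at e1 e2
      linarith
  · have hab1 : w a + w b = 1 := by
      rcases hw a with h1 | h1 <;> rcases hw b with h2 | h2 <;> simp_all
    let V : Submodule ℝ (Fin n → ℝ) :=
      { carrier := {x | ∃ l : ℝ, ∀ h : Fin (m+1) → ℝ,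
          x ⬝ᵥ (h ∘ r ∘ c) = (l • (fun _ => 1)) ⬝ᵥ (h ∘ r ∘ c)}
        add_mem' := by
          rintro x y ⟨g, hx⟩ ⟨g', hy⟩
          refine ⟨g + g', fun h => ?_⟩
          rw [add_dotProduct, hx, hy, ← add_dotProduct, add_smul]
        zero_mem' := ⟨0, fun h => by simp⟩
        smul_mem' := by
          rintro k x ⟨g, hx⟩
          refine ⟨k • g, fun h => ?_⟩
          rw [smul_dotProduct, hx, ← smul_dotProduct, smul_assoc] }
    refine not_ctrl _ _ V ?_ ?_ (Pi.single a 1) ?_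
    · rintro x ⟨g, hx⟩
      refine ⟨0, fun h => ?_⟩
      obtain ⟨h', hh'⟩ := hfacs h
      rw [lap_dot, hh', hx, ← hh', ← lap_dot, Matrix.mulVec_smul, lap_one]
      simp
    · refine ⟨1/2, fun h => ?_⟩
      rw [← sub_eq_zero, ← sub_dotProduct]
      have := sum_cells u v a b c huv hc hca hcb (w - (1/2 : ℝ) • fun _ => 1) (fun i => by
        have := hsum i
        simp
        linarith) (h ∘ r)
      rw [Function.comp_assoc] at this
      rw [this]
      simp only [Function.comp, hra, hrb, ← add_mul]
      simp
      left
      linarith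
    · rintro ⟨l, hl⟩
      let i0 : Fin t := ⟨0, ht⟩
      have e1 := hl (Pi.single (Fin.last m) 1)
      have e2 := hl (Pi.single (r (c (u i0))) 1)
      have hne : r (c (u i0)) ≠ Fin.last m := by
        rw [hcu]; exact hri i0
      have hl0 : l = 0 := by
        rw [smul_dotProduct] at e2
        have hpos : 0 < (fun _ => (1:ℝ)) ⬝ᵥ
            ((Pi.single (r (c (u i0))) 1 : Fin (m+1) → ℝ) ∘ r ∘ c) := by
          simp only [dotProduct, one_mul]
          refine Finset.sum_pos' (fun x _ => ?_) ⟨u i0, Finset.mem_univ _, ?_⟩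
          · simp only [Function.comp, Pi.single_apply]; split_ifs <;> norm_num
          · simp
        have e3 : (Pi.single a 1 : Fin n → ℝ) ⬝ᵥ
            ((Pi.single (r (c (u i0))) 1 : Fin (m+1) → ℝ) ∘ r ∘ c) = 0 := by
          simp [hcaa, hra, Ne.symm hne]
        rw [e3, smul_eq_mul] at e2
        rcases mul_eq_zero.1 e2.symm with h | h
        · exact h
        · exact absurd h hpos.ne'
      rw [hl0] at e1
      simp [hcaa, hra] at e1
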